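/- arXiv:1901.05383 — 4 statements merged into one kernel-verified Lean document; each statement's English description precedes it below -/
import Mathlib

section
/- Let P be a polynomial in two variables over ℂ of total degree d ≥ 1, and let P_d be its homogeneous component of degree d. Write Z(Q) = {z ∈ ℂ² : Q(z) = 0}. For every ε > 0 and R > 0 there exists λ₀ > 0 such that for all 0 < λ < λ₀: every point z of the rescaled zero set λ·Z(P) = {λw : w ∈ Z(P)} with ‖z‖ ≤ R satisfies dist(z, Z(P_d)) < ε. -/
open MvPolynomial

/-- The zero locus in `ℂ²` (with the Euclidean metric) of a polynomial in two variables. -/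
def zeroSet (Q : MvPolynomial (Fin 2) ℂ) : Set (EuclideanSpace ℂ (Fin 2)) :=
  {z | MvPolynomial.eval (fun i => z i) Q = 0}

/-!
The homogenization `F (t, x) = ∑ k ≤ d, t ^ (d - k) * P_k x` satisfies `F (t, t • w) = t ^ d * P w`
and `F (0, x) = P_d x`. Hence `t • Z(P)` lies in the zero set of `F (t, ·)`, a continuous family
that specializes to `P_d` at `t = 0`. By compactness, for `t` near `0` the zeros of `F (t, ·)` in a
compact set stay in any given neighbourhood of the zeros of `P_d`.
-/

open scoped Topology Pointwise ENNReal

theorem eventually_inter_preimage_subset {T X Y : Type*} [TopologicalSpace T] [TopologicalSpace X]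
    [TopologicalSpace Y] {F : T → X → Y} {C : Set Y} {K U : Set X} {t₀ : T}
    (hF : Continuous ↿F) (hC : IsClosed C) (hK : IsCompact K) (hU : IsOpen U)
    (h : K ∩ F t₀ ⁻¹' C ⊆ U) : ∀ᶠ t in 𝓝 t₀, K ∩ F t ⁻¹' C ⊆ U := by
  have hlocal : ∀ x ∈ K, ∀ᶠ p : T × X in 𝓝 (t₀, x), F p.1 p.2 ∈ C → p.2 ∈ U := by
    intro x hxK
    by_cases hxC : F t₀ x ∈ C
    · filter_upwards [continuousAt_snd.eventually_mem (hU.mem_nhds (h ⟨hxK, hxC⟩))] with p hp _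
        using hp
    · filter_upwards [hF.continuousAt.eventually_mem (hC.isOpen_compl.mem_nhds hxC)] with p hp hpC
        using absurd hpC hp
  filter_upwards [hK.eventually_forall_of_forall_eventually (P := fun t x => F t x ∈ C → x ∈ U)
    hlocal] with t ht x hx using ht x hx.1 hx.2

section Homogenization

variable {σ R : Type*} [CommSemiring R]

theorem eval_smul_of_isHomogeneous {Q : MvPolynomial σ R} {n : ℕ} (hQ : Q.IsHomogeneous n)
    (c : R) (x : σ → R) : eval (c • x) Q = c ^ n * eval x Q := by
  simp only [eval_eq, Finset.mul_sum]
  refine Finset.sum_congr rfl fun m hm => ?_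
  have hdegree : ∑ i ∈ m.support, m i = n := by
    rw [← Finsupp.degree_apply, Finsupp.degree_eq_weight_one]
    exact hQ (mem_support_iff.mp hm)
  simp only [Pi.smul_apply, smul_eq_mul, mul_pow, Finset.prod_mul_distrib,
    Finset.prod_pow_eq_pow_sum, hdegree]
  ring

theorem sum_range_homogeneousComponent_of_totalDegree_le {P : MvPolynomial σ R} {d : ℕ}
    (hP : P.totalDegree ≤ d) : ∑ k ∈ Finset.range (d + 1), homogeneousComponent k P = P := by
  conv_rhs => rw [← sum_homogeneousComponent P]
  refine (Finset.sum_subset (Finset.range_mono (by lia)) fun k _ hk => ?_).symm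
  exact homogeneousComponent_eq_zero k P (by simpa using hk)

/-- The value at `(t, x)` of the degree-`d` homogenization of `P`, where `t` is the homogenizing
variable. It is meaningful for `P.totalDegree ≤ d`: components of higher degree are dropped. -/
noncomputable def evalHomogenization (P : MvPolynomial σ R) (d : ℕ) (t : R) (x : σ → R) : R :=
  ∑ k ∈ Finset.range (d + 1), t ^ (d - k) * eval x (homogeneousComponent k P)

theorem evalHomogenization_zero (P : MvPolynomial σ R) (d : ℕ) (x : σ → R) :
    evalHomogenization P d 0 x = eval x (homogeneousComponent d P) := by
  have hlower : ∀ k ∈ Finset.range d,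
      (0 : R) ^ (d - k) * eval x (homogeneousComponent k P) = 0 := fun k hk => by
    rw [zero_pow (Nat.sub_ne_zero_of_lt (Finset.mem_range.mp hk)), zero_mul]
  rw [evalHomogenization, Finset.sum_range_succ, Finset.sum_eq_zero hlower]
  simp

theorem evalHomogenization_smul {P : MvPolynomial σ R} {d : ℕ} (hP : P.totalDegree ≤ d)
    (t : R) (w : σ → R) : evalHomogenization P d t (t • w) = t ^ d * eval w P := by
  have hterm : ∀ k ∈ Finset.range (d + 1),
      t ^ (d - k) * eval (t • w) (homogeneousComponent k P) =
        t ^ d * eval w (homogeneousComponent k P) := fun k hk => by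
    rw [eval_smul_of_isHomogeneous (homogeneousComponent_isHomogeneous k P), ← mul_assoc,
      ← pow_add, Nat.sub_add_cancel (Finset.mem_range_succ_iff.mp hk)]
  rw [evalHomogenization, Finset.sum_congr rfl hterm, ← Finset.mul_sum, ← map_sum,
    sum_range_homogeneousComponent_of_totalDegree_le hP]

variable [TopologicalSpace R] [IsTopologicalSemiring R]

theorem continuous_evalHomogenization (P : MvPolynomial σ R) (d : ℕ) :
    Continuous ↿(evalHomogenization P d) := by
  have hterm (k : ℕ) : Continuous fun p : R × (σ → R) =>
      p.1 ^ (d - k) * eval p.2 (homogeneousComponent k P) :=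
    (continuous_fst.pow (d - k)).mul ((continuous_eval _).comp continuous_snd)
  exact continuous_finsetSum (Finset.range (d + 1)) fun k _ => hterm k

theorem eventually_inter_smul_zeros_subset [T1Space R] {P : MvPolynomial σ R} {d : ℕ}
    (hP : P.totalDegree ≤ d) {K U : Set (σ → R)} (hK : IsCompact K) (hU : IsOpen U)
    (h : K ∩ {x | eval x (homogeneousComponent d P) = 0} ⊆ U) :
    ∀ᶠ t in 𝓝 (0 : R), K ∩ t • {w | eval w P = 0} ⊆ U := by
  have hzero : K ∩ evalHomogenization P d 0 ⁻¹' {0} ⊆ U := fun x ⟨hxK, hx⟩ =>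
    h ⟨hxK, (evalHomogenization_zero P d x).symm.trans hx⟩
  filter_upwards [eventually_inter_preimage_subset (continuous_evalHomogenization P d)
    isClosed_singleton hK hU hzero] with t ht
  rintro _ ⟨hxK, w, hw, rfl⟩
  have hw : eval w P = 0 := hw
  exact ht ⟨hxK, by simp [evalHomogenization_smul hP, hw]⟩

end Homogenization

theorem stmt_3_general {σ 𝕜 : Type*} [Fintype σ] [NontriviallyNormedField 𝕜] [ProperSpace 𝕜]
    {p : ℝ≥0∞} [Fact (1 ≤ p)] {P : MvPolynomial σ 𝕜} {d : ℕ} (hP : P.totalDegree ≤ d)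
    {ε : ℝ} (hε : 0 < ε) (R : ℝ) :
    ∀ᶠ t in 𝓝 (0 : 𝕜), ∀ w : PiLp p fun _ : σ => 𝕜, eval w P = 0 → ‖t • w‖ ≤ R →
      t • w ∈ Metric.thickening ε
        {z : PiLp p fun _ : σ => 𝕜 | eval z (homogeneousComponent d P) = 0} := by
  set Z := {z : PiLp p fun _ : σ => 𝕜 | eval z (homogeneousComponent d P) = 0}
  have : ProperSpace (PiLp p fun _ : σ => 𝕜) := FiniteDimensional.proper 𝕜 _
  have hK : IsCompact (WithLp.ofLp '' Metric.closedBall (0 : PiLp p fun _ : σ => 𝕜) R) :=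
    (isCompact_closedBall 0 R).image (PiLp.continuous_ofLp p _)
  have hU : IsOpen (WithLp.toLp p ⁻¹' Metric.thickening ε Z) :=
    Metric.isOpen_thickening.preimage (PiLp.continuous_toLp p _)
  filter_upwards [eventually_inter_smul_zeros_subset hP hK hU fun x hx =>
    Metric.self_subset_thickening hε Z hx.2] with t ht w hw hwR
  exact ht ⟨⟨t • w, mem_closedBall_zero_iff.mpr hwR, rfl⟩, Set.smul_mem_smul_set hw⟩

/-- If `P` has total degree `d ≥ 1` with top homogeneous component `P_d`, then for
every `ε, R > 0` there is `λ₀ > 0` such that for `0 < λ < λ₀`, every point of `λ·Z(P)` of norm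
at most `R` is within distance `ε` of `Z(P_d)`. -/
theorem stmt_3 (P : MvPolynomial (Fin 2) ℂ) (d : ℕ) (hd : 1 ≤ d)
    (hdeg : P.totalDegree = d) (ε R : ℝ) (hε : 0 < ε) (hR : 0 < R) :
    ∃ lam₀ > 0, ∀ lam : ℝ, 0 < lam → lam < lam₀ →
      ∀ w : EuclideanSpace ℂ (Fin 2), w ∈ zeroSet P → ‖lam • w‖ ≤ R →
        Metric.infDist (lam • w) (zeroSet (homogeneousComponent d P)) < ε := by
  obtain ⟨δ, hδ, hball⟩ := Metric.eventually_nhds_iff.mp (stmt_3_general (p := 2) hdeg.le hε R)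
  refine ⟨δ, hδ, fun lam hpos hlt w hw hwR => ?_⟩
  obtain ⟨z, hz, hdist⟩ := Metric.mem_thickening_iff.mp
    (hball (y := (lam : ℂ)) (by simpa [abs_of_pos hpos] using hlt) w hw hwR)
  exact (Metric.infDist_le_dist_of_mem hz).trans_lt hdist
end

section
/- Let a, b ∈ ℝ and define F : ℝ² \ {0} → ℂ² by F(x₁,x₂) = ( x₁ + i(a x₁ + b x₂)/r² , x₂ + i(a x₂ − b x₁)/r² ), where r² = x₁² + x₂². Then at every point of ℝ² \ {0}: (i) ω(∂₁F, ∂₂F) = 0, so the image of F is Lagrangian; (ii) the complex determinant det_ℂ(∂₁F, ∂₂F) = (∂₁F)₁(∂₂F)₂ − (∂₁F)₂(∂₂F)₁ equals 1 + (a² + b²)/r⁴, which is real and positive. Hence F is an immersion whose image is a special Lagrangian with Lagrangian angle 0. -/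
/-- The standard symplectic form `ω(u,v) = Im⟨u,v⟩ = Σⱼ Im(conj(uⱼ)·vⱼ)` on `ℂ²`. -/
noncomputable def omega2 (u v : ℂ × ℂ) : ℝ :=
  ((starRingEnd ℂ) u.1 * v.1 + (starRingEnd ℂ) u.2 * v.2).im

/-- The parametrisation `F(x₁,x₂) = (x₁ + i(ax₁+bx₂)/r², x₂ + i(ax₂−bx₁)/r²)` of the
two-dimensional Lawlor neck `L_{π/2}(a+ib)`. -/
noncomputable def Fneck (a b : ℝ) (x : ℝ × ℝ) : ℂ × ℂ :=
  ((x.1 : ℂ) + Complex.I * (((a * x.1 + b * x.2) / (x.1 ^ 2 + x.2 ^ 2) : ℝ) : ℂ),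
   (x.2 : ℂ) + Complex.I * (((a * x.2 - b * x.1) / (x.1 ^ 2 + x.2 ^ 2) : ℝ) : ℂ))

/-!
Write `z = x₁ + i x₂` and `c = a + i b`. The second terms of `F` are the coordinates of
`conj (c / z)`, so `F` is the complex curve `z ↦ (z, c / z)` followed by the real-linear map
`(z, w) ↦ (Re z + i Re w, Im z - i Im w)`. This map is a hyperkähler rotation: it pulls `ω` back to
`Re (dz₁ ∧ dz₂)` and `dz₁ ∧ dz₂` back to `ω - i Im (dz₁ ∧ dz₂)`. On a complex line, `dz₁ ∧ dz₂`
vanishes and `ω(u, iu) = |u|²`. Hence the rotation sends every complex curve `g` to a special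
Lagrangian of angle `0` whose determinant is `|g'|²`, wherever `g' ≠ 0`; here `g z = (z, c / z)` is
an immersion with `|g'|² = 1 + |c|² / |z|⁴`.
-/

lemma re_equivRealProdCLM_symm (x : ℝ × ℝ) : (Complex.equivRealProdCLM.symm x).re = x.1 := by
  simp [Complex.equivRealProdCLM_symm_apply]

lemma im_equivRealProdCLM_symm (x : ℝ × ℝ) : (Complex.equivRealProdCLM.symm x).im = x.2 := by
  simp [Complex.equivRealProdCLM_symm_apply]

lemma normSq_equivRealProdCLM_symm (x : ℝ × ℝ) :
    Complex.normSq (Complex.equivRealProdCLM.symm x) = x.1 ^ 2 + x.2 ^ 2 := by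
  rw [Complex.equivRealProdCLM_symm_apply, Complex.normSq_add_mul_I]

lemma re_equivRealProdCLM_symm_div (p q : ℝ × ℝ) :
    (Complex.equivRealProdCLM.symm p / Complex.equivRealProdCLM.symm q).re =
      (p.1 * q.1 + p.2 * q.2) / (q.1 ^ 2 + q.2 ^ 2) := by
  rw [Complex.div_re, ← add_div, normSq_equivRealProdCLM_symm]
  simp only [re_equivRealProdCLM_symm, im_equivRealProdCLM_symm]

lemma im_equivRealProdCLM_symm_div (p q : ℝ × ℝ) :
    (Complex.equivRealProdCLM.symm p / Complex.equivRealProdCLM.symm q).im =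
      (p.2 * q.1 - p.1 * q.2) / (q.1 ^ 2 + q.2 ^ 2) := by
  rw [Complex.div_im, ← sub_div, normSq_equivRealProdCLM_symm]
  simp only [re_equivRealProdCLM_symm, im_equivRealProdCLM_symm]

/-- The holomorphic volume form `dz₁ ∧ dz₂` on `ℂ²`, evaluated on a pair of vectors. -/
def holomorphicVolume (u v : ℂ × ℂ) : ℂ :=
  u.1 * v.2 - u.2 * v.1

/-- The hyperkähler rotation `(z, w) ↦ (Re z + i Re w, Im z - i Im w)` of `ℂ²`, which turns complex
curves into special Lagrangians of angle `0`. It is only real-linear for the standard complex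
structure. -/
noncomputable def hyperkahlerRotation : ℂ × ℂ →L[ℝ] ℂ × ℂ :=
  LinearMap.toContinuousLinearMap
    { toFun u := (⟨u.1.re, u.2.re⟩, ⟨u.1.im, -u.2.im⟩)
      map_add' u v := by
        refine Prod.ext (Complex.ext ?_ ?_) (Complex.ext ?_ ?_) <;> simp [add_comm]
      map_smul' r u := by
        refine Prod.ext (Complex.ext ?_ ?_) (Complex.ext ?_ ?_) <;> simp }

lemma hyperkahlerRotation_apply (u : ℂ × ℂ) :
    hyperkahlerRotation u = (⟨u.1.re, u.2.re⟩, ⟨u.1.im, -u.2.im⟩) :=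
  rfl

lemma omega2_hyperkahlerRotation (u v : ℂ × ℂ) :
    omega2 (hyperkahlerRotation u) (hyperkahlerRotation v) = (holomorphicVolume u v).re := by
  simp only [omega2, holomorphicVolume, hyperkahlerRotation_apply, Complex.add_im, Complex.sub_re,
    Complex.mul_re, Complex.mul_im, Complex.conj_re, Complex.conj_im]
  ring

lemma holomorphicVolume_hyperkahlerRotation (u v : ℂ × ℂ) :
    holomorphicVolume (hyperkahlerRotation u) (hyperkahlerRotation v) =
      ⟨omega2 u v, -(holomorphicVolume u v).im⟩ := by
  apply Complex.ext <;>
  · simp only [omega2, holomorphicVolume, hyperkahlerRotation_apply, Complex.add_im, Complex.sub_re,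
      Complex.sub_im, Complex.mul_re, Complex.mul_im, Complex.conj_re, Complex.conj_im]
    ring

lemma holomorphicVolume_smul_self (c : ℂ) (u : ℂ × ℂ) : holomorphicVolume u (c • u) = 0 := by
  simp only [holomorphicVolume, Prod.smul_fst, Prod.smul_snd, smul_eq_mul]
  ring

lemma omega2_smul_self (c : ℂ) (u : ℂ × ℂ) :
    omega2 u (c • u) = c.im * (‖u.1‖ ^ 2 + ‖u.2‖ ^ 2) := by
  simp only [omega2, Prod.smul_fst, Prod.smul_snd, smul_eq_mul, Complex.sq_norm,
    Complex.normSq_apply, Complex.add_im, Complex.mul_re, Complex.mul_im, Complex.conj_re,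
    Complex.conj_im]
  ring

section ComplexCurve

/-- The real parametrisation `(x₁, x₂) ↦ hyperkahlerRotation (g (x₁ + i x₂))` of the rotation of
the complex curve parametrised by `g`. -/
noncomputable def rotatedCurve (g : ℂ → ℂ × ℂ) (x : ℝ × ℝ) : ℂ × ℂ :=
  hyperkahlerRotation (g (Complex.equivRealProdCLM.symm x))

variable {g : ℂ → ℂ × ℂ} {g' : ℂ × ℂ} {x : ℝ × ℝ}

lemma hasFDerivAt_rotatedCurve (hg : HasDerivAt g g' (Complex.equivRealProdCLM.symm x)) :
    HasFDerivAt (rotatedCurve g)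
      (hyperkahlerRotation ∘L (ContinuousLinearMap.toSpanSingleton ℂ g').restrictScalars ℝ ∘L
        (Complex.equivRealProdCLM.symm : ℝ × ℝ →L[ℝ] ℂ)) x :=
  hyperkahlerRotation.hasFDerivAt.comp x <|
    (hg.hasFDerivAt.restrictScalars ℝ).comp x Complex.equivRealProdCLM.symm.hasFDerivAt

lemma fderiv_rotatedCurve_fst (hg : HasDerivAt g g' (Complex.equivRealProdCLM.symm x)) :
    fderiv ℝ (rotatedCurve g) x (1, 0) = hyperkahlerRotation g' := by
  have one_eq : Complex.equivRealProdCLM.symm (1, 0) = 1 := by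
    simp [Complex.equivRealProdCLM_symm_apply]
  simp [(hasFDerivAt_rotatedCurve hg).fderiv, one_eq]

lemma fderiv_rotatedCurve_snd (hg : HasDerivAt g g' (Complex.equivRealProdCLM.symm x)) :
    fderiv ℝ (rotatedCurve g) x (0, 1) = hyperkahlerRotation (Complex.I • g') := by
  have I_eq : Complex.equivRealProdCLM.symm (0, 1) = Complex.I := by
    simp [Complex.equivRealProdCLM_symm_apply]
  simp [(hasFDerivAt_rotatedCurve hg).fderiv, I_eq]

theorem omega2_fderiv_rotatedCurve (hg : HasDerivAt g g' (Complex.equivRealProdCLM.symm x)) :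
    omega2 (fderiv ℝ (rotatedCurve g) x (1, 0)) (fderiv ℝ (rotatedCurve g) x (0, 1)) = 0 := by
  rw [fderiv_rotatedCurve_fst hg, fderiv_rotatedCurve_snd hg, omega2_hyperkahlerRotation,
    holomorphicVolume_smul_self, Complex.zero_re]

theorem holomorphicVolume_fderiv_rotatedCurve
    (hg : HasDerivAt g g' (Complex.equivRealProdCLM.symm x)) :
    holomorphicVolume (fderiv ℝ (rotatedCurve g) x (1, 0)) (fderiv ℝ (rotatedCurve g) x (0, 1)) =
      ((‖g'.1‖ ^ 2 + ‖g'.2‖ ^ 2 : ℝ) : ℂ) := by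
  rw [fderiv_rotatedCurve_fst hg, fderiv_rotatedCurve_snd hg,
    holomorphicVolume_hyperkahlerRotation, holomorphicVolume_smul_self, omega2_smul_self,
    Complex.I_im, one_mul, Complex.zero_im, neg_zero, Complex.ofReal_def]

end ComplexCurve

lemma Fneck_eq_rotatedCurve (a b : ℝ) :
    Fneck a b = rotatedCurve fun z => (z, Complex.equivRealProdCLM.symm (a, b) / z) := by
  funext x
  rw [rotatedCurve, hyperkahlerRotation_apply, re_equivRealProdCLM_symm_div,
    im_equivRealProdCLM_symm_div, re_equivRealProdCLM_symm, im_equivRealProdCLM_symm, ← neg_div,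
    neg_sub, Complex.mk_eq_add_mul_I, Complex.mk_eq_add_mul_I, mul_comm _ Complex.I,
    mul_comm _ Complex.I, Fneck]

lemma hasDerivAt_graph_const_div (c : ℂ) {z : ℂ} (hz : z ≠ 0) :
    HasDerivAt (fun w => (w, c / w)) (1, -c / z ^ 2) z := by
  simpa [div_eq_mul_inv] using (hasDerivAt_id z).prodMk ((hasDerivAt_inv hz).const_mul c)

/-- At every point of `ℝ² \ {0}`, `F` is differentiable, `ω(∂₁F, ∂₂F) = 0` (so the
image of `F` is Lagrangian), and `det_ℂ(∂₁F, ∂₂F) = 1 + (a²+b²)/r⁴`, which is real and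
positive. -/
theorem stmt_8 (a b : ℝ) (x : ℝ × ℝ) (hx : x ≠ 0) :
    DifferentiableAt ℝ (Fneck a b) x ∧
    omega2 (fderiv ℝ (Fneck a b) x (1, 0)) (fderiv ℝ (Fneck a b) x (0, 1)) = 0 ∧
    (fderiv ℝ (Fneck a b) x (1, 0)).1 * (fderiv ℝ (Fneck a b) x (0, 1)).2
      - (fderiv ℝ (Fneck a b) x (1, 0)).2 * (fderiv ℝ (Fneck a b) x (0, 1)).1
      = 1 + (((a ^ 2 + b ^ 2) / (x.1 ^ 2 + x.2 ^ 2) ^ 2 : ℝ) : ℂ) ∧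
    0 < 1 + (a ^ 2 + b ^ 2) / (x.1 ^ 2 + x.2 ^ 2) ^ 2 := by
  set c := Complex.equivRealProdCLM.symm (a, b) with hc
  set z := Complex.equivRealProdCLM.symm x with hz
  have hg : HasDerivAt (fun w => (w, c / w)) (1, -c / z ^ 2) z :=
    hasDerivAt_graph_const_div c (Complex.equivRealProdCLM.symm.map_ne_zero_iff.mpr hx)
  have norm_sq_deriv : ‖-c / z ^ 2‖ ^ 2 = (a ^ 2 + b ^ 2) / (x.1 ^ 2 + x.2 ^ 2) ^ 2 := by
    rw [Complex.sq_norm, Complex.normSq_div, Complex.normSq_neg, map_pow, hc, hz,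
      normSq_equivRealProdCLM_symm, normSq_equivRealProdCLM_symm]
  have hdet := holomorphicVolume_fderiv_rotatedCurve hg
  rw [norm_one, one_pow, norm_sq_deriv, Complex.ofReal_add, Complex.ofReal_one] at hdet
  rw [Fneck_eq_rotatedCurve]
  exact ⟨(hasFDerivAt_rotatedCurve hg).differentiableAt, omega2_fderiv_rotatedCurve hg, hdet,
    by positivity⟩
end

section
/- Let a, b ∈ ℝ, let F : ℝ² \ {0} → ℂ² be F(x₁,x₂) = ( x₁ + i(a x₁ + b x₂)/r² , x₂ + i(a x₂ − b x₁)/r² ) with r² = x₁² + x₂², and let R : ℂ² → ℂ² be the ℝ-linear map R(z₁, z₂) = ( Re z₁ + i·Re z₂ , Im z₁ − i·Im z₂ ). Then for every (x₁,x₂) ≠ 0, the point (w₁, w₂) = R(F(x₁,x₂)) satisfies w₁·w₂ = a + ib. In particular R maps the image of F into the complex curve {(w₁,w₂) ∈ ℂ² : w₁w₂ = a + ib}. -/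
/-- The hyperkähler rotation `R(z₁,z₂) = (Re z₁ + i·Re z₂, Im z₁ − i·Im z₂)` of `ℂ²`. -/
noncomputable def HKrot (z : ℂ × ℂ) : ℂ × ℂ :=
  ((z.1.re : ℂ) + (z.2.re : ℂ) * Complex.I, (z.1.im : ℂ) - (z.2.im : ℂ) * Complex.I)

open Complex

theorem HKrot_ofReal_add_I_mul_ofReal (x₁ y₁ x₂ y₂ : ℝ) :
    HKrot (x₁ + I * y₁, x₂ + I * y₂) = (x₁ + x₂ * I, y₁ - y₂ * I) := by
  simp [HKrot]

theorem add_mul_I_div_add_mul_I (a b x₁ x₂ : ℝ) :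
    (a + b * I) / (x₁ + x₂ * I) =
      ((a * x₁ + b * x₂) / (x₁ ^ 2 + x₂ ^ 2) : ℝ) -
        ((a * x₂ - b * x₁) / (x₁ ^ 2 + x₂ ^ 2) : ℝ) * I := by
  apply Complex.ext
  · rw [div_re, normSq_add_mul_I, sub_re, ofReal_re, re_ofReal_mul]
    simp [add_div]
  · rw [div_im, normSq_add_mul_I, sub_im, ofReal_im, im_ofReal_mul]
    simp [sub_div]

theorem HKrot_Fneck (a b : ℝ) (x : ℝ × ℝ) :
    HKrot (Fneck a b x) = (x.1 + x.2 * I, (a + b * I) / (x.1 + x.2 * I)) := by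
  rw [Fneck, HKrot_ofReal_add_I_mul_ofReal, add_mul_I_div_add_mul_I]

theorem fst_add_snd_mul_I_ne_zero {x : ℝ × ℝ} (hx : x ≠ 0) : (x.1 + x.2 * I : ℂ) ≠ 0 := by
  simpa [Complex.ext_iff, Prod.ext_iff] using hx

/-- For every `(x₁,x₂) ≠ 0`, the point `(w₁,w₂) = R(F(x₁,x₂))` satisfies
`w₁·w₂ = a + ib`; i.e. the hyperkähler rotation `R` maps the image of `F` into the complex
curve `{w₁w₂ = a + ib}`. -/
theorem stmt_9 (a b : ℝ) (x : ℝ × ℝ) (hx : x ≠ 0) :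
    (HKrot (Fneck a b x)).1 * (HKrot (Fneck a b x)).2 = (a : ℂ) + (b : ℂ) * Complex.I := by
  rw [HKrot_Fneck]
  exact mul_div_cancel₀ _ (fst_add_snd_mul_I_ne_zero hx)
end

section
/- Let a, b ∈ ℝ and let F : ℝ² \ {0} → ℂ² be F(x₁,x₂) = ( x₁ + i(a x₁ + b x₂)/r² , x₂ + i(a x₂ − b x₁)/r² ) with r² = x₁² + x₂². Let γ(t) = F(cos t, sin t) for t ∈ [0, 2π]. Then ∫₀^{2π} λ_{γ(t)}(γ'(t)) dt = 4πb, where λ_z(v) = Im⟨z,v⟩ is the Liouville form. Consequently, if b ≠ 0 then there is no differentiable function g : ℝ² \ {0} → ℝ with dg_x(v) = λ_{F(x)}(dF_x(v)) for all x and v, i.e. the pullback F*λ of the Liouville form is not exact; the Lagrangian L_{π/2}(a+ib) is exact if and only if b = 0. -/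
open Real Set

/-!
On `ℂ² = ℝ² ⊕ iℝ²` the Liouville form pulls back along `p + iu` to `⟨p, du⟩ − ⟨u, dp⟩`, that is,
to `d⟨p, u⟩ − 2⟨u, dp⟩`. The Lawlor neck is the graph `x + iU(x)` of a field with `⟨x, U(x)⟩ = a`
constant, so only `−2⟨U, dx⟩ = −2a d(log r) + 2b dθ` remains. The first term has the primitive
`−a log r²`, and the second has the period `4πb` around the origin.
-/

section LiouvilleForm

variable {E : Type*} [NormedAddCommGroup E] [NormedSpace ℝ E]

/-- `g` is a primitive on `s` of the pullback `F*λ` of the Liouville form of `ℂ²`. Derivatives are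
taken in the ambient space and are `0` where they do not exist, so the notion is meant for open `s`
and for `F` differentiable on `s`. -/
def IsLiouvillePrimitiveOn (F : E → ℂ × ℂ) (g : E → ℝ) (s : Set E) : Prop :=
  ∀ x ∈ s, DifferentiableAt ℝ g x ∧
    ∀ v : E, fderiv ℝ g x v = omega2 (F x) (fderiv ℝ F x v)

theorem IsLiouvillePrimitiveOn.integral_eq_sub {F : E → ℂ × ℂ} {g : E → ℝ} {s : Set E}
    (hg : IsLiouvillePrimitiveOn F g s) {c : ℝ → E} {t₀ t₁ : ℝ}
    (hF : ∀ t ∈ uIcc t₀ t₁, DifferentiableAt ℝ F (c t))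
    (hc : ∀ t ∈ uIcc t₀ t₁, DifferentiableAt ℝ c t) (hcs : ∀ t ∈ uIcc t₀ t₁, c t ∈ s)
    (hint : IntervalIntegrable (fun t ↦ omega2 (F (c t)) (deriv (fun s ↦ F (c s)) t))
      MeasureTheory.volume t₀ t₁) :
    ∫ t in t₀..t₁, omega2 (F (c t)) (deriv (fun s ↦ F (c s)) t) = g (c t₁) - g (c t₀) := by
  refine intervalIntegral.integral_eq_sub_of_hasDerivAt (f := g ∘ c) (fun t ht ↦ ?_) hint
  obtain ⟨hgt, hgv⟩ := hg (c t) (hcs t ht)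
  have hchain : deriv (fun s ↦ F (c s)) t = fderiv ℝ F (c t) (deriv c t) :=
    fderiv_comp_deriv t (hF t ht) (hc t ht)
  rw [hchain, ← hgv]
  exact hgt.hasFDerivAt.comp_hasDerivAt t (hc t ht).hasDerivAt

/-- The real-linear identification `(p, q) ↦ p + iq` of `ℝ² × ℝ²` with `ℂ²`. -/
noncomputable def ofReIm : (ℝ × ℝ) × (ℝ × ℝ) →L[ℝ] ℂ × ℂ :=
  let ofReal₂ := Complex.ofRealCLM.prodMap Complex.ofRealCLM
  ofReal₂.coprod (Complex.I • ofReal₂)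

theorem ofReIm_apply (p q : ℝ × ℝ) :
    ofReIm (p, q) = ((p.1 : ℂ) + Complex.I * q.1, (p.2 : ℂ) + Complex.I * q.2) := by
  simp [ofReIm, Prod.ext_iff]

theorem omega2_ofReIm (p q p' q' : ℝ × ℝ) :
    omega2 (ofReIm (p, q)) (ofReIm (p', q')) =
      (p.1 * q'.1 + p.2 * q'.2) - (q.1 * p'.1 + q.2 * p'.2) := by
  simp only [omega2, ofReIm_apply, map_add, map_mul, Complex.conj_ofReal, Complex.conj_I,
    Complex.add_im, Complex.add_re, Complex.mul_im, Complex.mul_re, Complex.neg_re,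
    Complex.neg_im, Complex.I_re, Complex.I_im, Complex.ofReal_re, Complex.ofReal_im]
  ring

theorem omega2_fderiv_ofReIm {p u : E → ℝ × ℝ} {x : E} (hp : DifferentiableAt ℝ p x)
    (hu : DifferentiableAt ℝ u x) (v : E) :
    omega2 (ofReIm (p x, u x)) (fderiv ℝ (fun y ↦ ofReIm (p y, u y)) x v) =
      fderiv ℝ (fun y ↦ (p y).1 * (u y).1 + (p y).2 * (u y).2) x v -
        2 * ((u x).1 * (fderiv ℝ p x v).1 + (u x).2 * (fderiv ℝ p x v).2) := by
  have hmap : HasFDerivAt (fun y ↦ ofReIm (p y, u y))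
      (ofReIm.comp ((fderiv ℝ p x).prod (fderiv ℝ u x))) x :=
    ofReIm.hasFDerivAt.comp x (hp.hasFDerivAt.prodMk hu.hasFDerivAt)
  have hdot : HasFDerivAt (fun y ↦ (p y).1 * (u y).1 + (p y).2 * (u y).2) _ x :=
    (hp.hasFDerivAt.fst.mul hu.hasFDerivAt.fst).add (hp.hasFDerivAt.snd.mul hu.hasFDerivAt.snd)
  rw [hmap.fderiv, hdot.fderiv, ContinuousLinearMap.comp_apply, ContinuousLinearMap.prod_apply,
    omega2_ofReIm]
  simp only [add_apply, smul_apply, ContinuousLinearMap.comp_apply, ContinuousLinearMap.coe_fst',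
    ContinuousLinearMap.coe_snd', smul_eq_mul]
  ring

end LiouvilleForm

section LawlorNeck

variable {x : ℝ × ℝ}

theorem fst_sq_add_snd_sq_ne_zero (hx : x ≠ 0) : x.1 ^ 2 + x.2 ^ 2 ≠ 0 := by
  contrapose! hx
  obtain ⟨hfst, hsnd⟩ := (add_eq_zero_iff_of_nonneg (sq_nonneg x.1) (sq_nonneg x.2)).1 hx
  exact Prod.ext ((pow_eq_zero_iff two_ne_zero).1 hfst) ((pow_eq_zero_iff two_ne_zero).1 hsnd)

/-- The field `U` on `ℝ² \ {0}` whose graph `x + iU(x)` is the Lawlor neck `L_{π/2}(a+ib)`; in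
complex notation `U(w) = (a − ib) / conj w`. Division by zero gives it the value `0` at `0`. -/
noncomputable def neckField (a b : ℝ) (x : ℝ × ℝ) : ℝ × ℝ :=
  ((a * x.1 + b * x.2) / (x.1 ^ 2 + x.2 ^ 2), (a * x.2 - b * x.1) / (x.1 ^ 2 + x.2 ^ 2))

theorem Fneck_eq_ofReIm_neckField (a b : ℝ) :
    Fneck a b = fun x ↦ ofReIm (x, neckField a b x) := by
  funext x
  rw [ofReIm_apply, Fneck, neckField]

theorem dot_neckField (a b : ℝ) (hx : x ≠ 0) :
    x.1 * (neckField a b x).1 + x.2 * (neckField a b x).2 = a := by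
  have hr := fst_sq_add_snd_sq_ne_zero hx
  simp only [neckField]
  field_simp
  ring

theorem differentiableAt_neckField (a b : ℝ) (hx : x ≠ 0) :
    DifferentiableAt ℝ (neckField a b) x := by
  have hr := fst_sq_add_snd_sq_ne_zero hx
  unfold neckField
  fun_prop (disch := exact hr)

theorem differentiableAt_Fneck (a b : ℝ) (hx : x ≠ 0) : DifferentiableAt ℝ (Fneck a b) x := by
  have hU := differentiableAt_neckField a b hx
  rw [Fneck_eq_ofReIm_neckField]
  fun_prop

theorem omega2_fderiv_Fneck (a b : ℝ) (hx : x ≠ 0) (v : ℝ × ℝ) :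
    omega2 (Fneck a b x) (fderiv ℝ (Fneck a b) x v) =
      (2 * b * (x.1 * v.2 - x.2 * v.1) - 2 * a * (x.1 * v.1 + x.2 * v.2)) /
        (x.1 ^ 2 + x.2 ^ 2) := by
  have hdot : (fun y ↦ y.1 * (neckField a b y).1 + y.2 * (neckField a b y).2) =ᶠ[nhds x]
      fun _ ↦ a :=
    (eventually_ne_nhds hx).mono fun _ hy ↦ dot_neckField a b hy
  have hpull := omega2_fderiv_ofReIm differentiableAt_id (differentiableAt_neckField a b hx) v
  simp only [id_eq, hdot.fderiv_eq, fderiv_fun_const, fderiv_id] at hpull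
  rw [Fneck_eq_ofReIm_neckField, hpull]
  simp only [zero_apply, Pi.zero_apply, neckField, ContinuousLinearMap.id_apply, zero_sub]
  ring

theorem cos_sin_ne_zero (t : ℝ) : (cos t, sin t) ≠ (0 : ℝ × ℝ) := by
  intro h
  obtain ⟨hcos, hsin⟩ := Prod.mk_eq_zero.1 h
  simpa [hcos, hsin] using sin_sq_add_cos_sq t

theorem hasDerivAt_cos_sin (t : ℝ) :
    HasDerivAt (fun s ↦ (cos s, sin s)) (-sin t, cos t) t :=
  (hasDerivAt_cos t).prodMk (hasDerivAt_sin t)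

theorem omega2_deriv_Fneck_cos_sin (a b t : ℝ) :
    omega2 (Fneck a b (cos t, sin t)) (deriv (fun s ↦ Fneck a b (cos s, sin s)) t) = 2 * b := by
  have hchain : deriv (fun s ↦ Fneck a b (cos s, sin s)) t =
      fderiv ℝ (Fneck a b) (cos t, sin t) (deriv (fun s ↦ (cos s, sin s)) t) :=
    fderiv_comp_deriv t (differentiableAt_Fneck a b (cos_sin_ne_zero t))
      (hasDerivAt_cos_sin t).differentiableAt
  rw [hchain, (hasDerivAt_cos_sin t).deriv, omega2_fderiv_Fneck a b (cos_sin_ne_zero t),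
    cos_sq_add_sin_sq]
  linear_combination 2 * b * cos_sq_add_sin_sq t

theorem integral_omega2_Fneck_cos_sin (a b : ℝ) :
    ∫ t in (0 : ℝ)..(2 * π),
      omega2 (Fneck a b (cos t, sin t)) (deriv (fun s ↦ Fneck a b (cos s, sin s)) t) =
        4 * π * b := by
  simp only [omega2_deriv_Fneck_cos_sin, intervalIntegral.integral_const, smul_eq_mul]
  ring

theorem hasFDerivAt_log_fst_sq_add_snd_sq (hx : x ≠ 0) :
    HasFDerivAt (fun y : ℝ × ℝ ↦ log (y.1 ^ 2 + y.2 ^ 2))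
      ((2 / (x.1 ^ 2 + x.2 ^ 2)) •
        (x.1 • ContinuousLinearMap.fst ℝ ℝ ℝ + x.2 • ContinuousLinearMap.snd ℝ ℝ ℝ)) x := by
  have hfst : HasFDerivAt (fun y : ℝ × ℝ ↦ y.1) (ContinuousLinearMap.fst ℝ ℝ ℝ) x :=
    hasFDerivAt_fst
  have hsnd : HasFDerivAt (fun y : ℝ × ℝ ↦ y.2) (ContinuousLinearMap.snd ℝ ℝ ℝ) x :=
    hasFDerivAt_snd
  have hlog := ((hfst.pow 2).add (hsnd.pow 2)).log (fst_sq_add_snd_sq_ne_zero hx)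
  refine hlog.congr_fderiv (ContinuousLinearMap.ext fun v ↦ ?_)
  simp only [Pi.add_apply, Nat.add_one_sub_one, pow_one, nsmul_eq_mul, Nat.cast_ofNat, smul_add,
    add_apply, smul_apply, ContinuousLinearMap.coe_fst', ContinuousLinearMap.coe_snd', smul_eq_mul]
  ring

theorem isLiouvillePrimitiveOn_Fneck_zero (a : ℝ) :
    IsLiouvillePrimitiveOn (Fneck a 0) (fun x ↦ -a * log (x.1 ^ 2 + x.2 ^ 2)) {0}ᶜ := by
  intro x hx
  have hlog := (hasFDerivAt_log_fst_sq_add_snd_sq hx).const_mul (-a)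
  refine ⟨hlog.differentiableAt, fun v ↦ ?_⟩
  rw [hlog.fderiv, omega2_fderiv_Fneck a 0 hx]
  simp only [smul_add, neg_smul, add_apply, neg_apply, smul_apply, ContinuousLinearMap.coe_fst',
    ContinuousLinearMap.coe_snd', smul_eq_mul, mul_zero, zero_mul, zero_sub]
  ring

theorem IsLiouvillePrimitiveOn.eq_zero_of_Fneck {a b : ℝ} {g : ℝ × ℝ → ℝ}
    (hg : IsLiouvillePrimitiveOn (Fneck a b) g {0}ᶜ) : b = 0 := by
  have hperiod := hg.integral_eq_sub (c := fun t ↦ (cos t, sin t)) (t₀ := 0) (t₁ := 2 * π)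
    (fun t _ ↦ differentiableAt_Fneck a b (cos_sin_ne_zero t))
    (fun t _ ↦ (hasDerivAt_cos_sin t).differentiableAt) (fun t _ ↦ cos_sin_ne_zero t)
    (by simp only [omega2_deriv_Fneck_cos_sin, intervalIntegrable_const])
  have hzero : 4 * π * b = 0 := by
    simpa [integral_omega2_Fneck_cos_sin] using hperiod
  simpa [pi_ne_zero] using hzero

theorem exists_isLiouvillePrimitiveOn_Fneck_iff (a b : ℝ) :
    (∃ g, IsLiouvillePrimitiveOn (Fneck a b) g {0}ᶜ) ↔ b = 0 := by
  constructor
  · rintro ⟨g, hg⟩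
    exact hg.eq_zero_of_Fneck
  · rintro rfl
    exact ⟨_, isLiouvillePrimitiveOn_Fneck_zero a⟩

end LawlorNeck

/-- The integral of the Liouville form over the loop `γ(t) = F(cos t, sin t)`
equals `4πb`; consequently if `b ≠ 0` the pullback `F*λ` admits no primitive on `ℝ² \ {0}`,
and `F*λ` admits such a primitive (`L_{π/2}(a+ib)` is exact) if and only if `b = 0`. -/
theorem stmt_10 (a b : ℝ) :
    (∫ t in (0 : ℝ)..(2 * Real.pi),
        omega2 (Fneck a b (Real.cos t, Real.sin t))
          (deriv (fun s => Fneck a b (Real.cos s, Real.sin s)) t)) = 4 * Real.pi * b ∧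
    (b ≠ 0 → ¬ ∃ g : ℝ × ℝ → ℝ, ∀ x : ℝ × ℝ, x ≠ 0 →
        DifferentiableAt ℝ g x ∧
        ∀ v : ℝ × ℝ, fderiv ℝ g x v = omega2 (Fneck a b x) (fderiv ℝ (Fneck a b) x v)) ∧
    ((∃ g : ℝ × ℝ → ℝ, ∀ x : ℝ × ℝ, x ≠ 0 →
        DifferentiableAt ℝ g x ∧
        ∀ v : ℝ × ℝ, fderiv ℝ g x v = omega2 (Fneck a b x) (fderiv ℝ (Fneck a b) x v))
      ↔ b = 0) := by
  have hexact := exists_isLiouvillePrimitiveOn_Fneck_iff a b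
  exact ⟨integral_omega2_Fneck_cos_sin a b, fun hb hg ↦ hb (hexact.1 hg), hexact⟩
end
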